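/- arXiv:2302.01077 — 2 statements merged into one kernel-verified Lean document; each statement's English description precedes it below -/
import Mathlib

section
/- Let X, Y ∈ G_∞(H) be compatible subspaces such that X ∩ Y has codimension 2 in both X and Y. Then there exists Z ∈ G_∞(H) which is ortho-adjacent to both X and Y. -/
open Module Submodule Classical

variable {H : Type*} [NormedAddCommGroup H] [InnerProductSpace ℂ H] [CompleteSpace H]

/-- The orthogonal projection of `H` onto a closed subspace `K`, as a map `H →L[ℂ] H`
(defined to be `0` if `K` is not closed). -/
noncomputable def projCLM (K : Submodule ℂ H) : H →L[ℂ] H :=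
  if h : IsClosed (K : Set H) then
    haveI : CompleteSpace K := h.completeSpace_coe
    K.subtypeL.comp (orthogonalProjection K)
  else 0

/-- Two (closed) subspaces are compatible if their orthogonal projections commute. -/
def Compatible (K L : Submodule ℂ H) : Prop := Commute (projCLM K) (projCLM L)

/-- `W` is a subspace of `X` of finite codimension `n` in `X`. -/
def CodimIn (W X : Submodule ℂ H) (n : ℕ) : Prop :=
  W ≤ X ∧ FiniteDimensional ℂ (↥X ⧸ W.comap X.subtype) ∧
    finrank ℂ (↥X ⧸ W.comap X.subtype) = n

/-- `X` and `Y` are adjacent: `X ∩ Y` is a hyperplane in both `X` and `Y`. -/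
def Adjacent (X Y : Submodule ℂ H) : Prop :=
  CodimIn (X ⊓ Y) X 1 ∧ CodimIn (X ⊓ Y) Y 1

/-- `X` and `Y` are ortho-adjacent: adjacent and compatible. -/
def OrthoAdjacent (X Y : Submodule ℂ H) : Prop := Adjacent X Y ∧ Compatible X Y

/-- The Grassmannian `G_∞(H)` of closed subspaces of `H` whose dimension and
codimension both are infinite. -/
def Ginf : Set (Submodule ℂ H) :=
  {X | IsClosed (X : Set H) ∧ ¬FiniteDimensional ℂ X ∧ ¬FiniteDimensional ℂ Xᗮ}

/-- `X ∩ Y` has the same finite codimension in both `X` and `Y`. -/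
def SameFinCodim (X Y : Submodule ℂ H) : Prop :=
  ∃ n : ℕ, CodimIn (X ⊓ Y) X n ∧ CodimIn (X ⊓ Y) Y n

/-- An `A`-component of `G_∞(H)`: a set of elements pairwise at the same finite
codimension, maximal with respect to this property. -/
def IsAComponent (C : Set (Submodule ℂ H)) : Prop :=
  C ⊆ Ginf ∧ (∀ X ∈ C, ∀ Y ∈ C, SameFinCodim X Y) ∧
    ∀ D : Set (Submodule ℂ H), D ⊆ Ginf → (∀ X ∈ D, ∀ Y ∈ D, SameFinCodim X Y) →
      C ⊆ D → D = C

/-- The star `S(X)`: all closed subspaces of `H` containing `X` as a hyperplane. -/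
def starSet (X : Submodule ℂ H) : Set (Submodule ℂ H) :=
  {Y | IsClosed (Y : Set H) ∧ CodimIn X Y 1}

/-- The top `G¹(X)`: all closed hyperplanes of `X`. -/
def topSet (X : Submodule ℂ H) : Set (Submodule ℂ H) :=
  {M | IsClosed (M : Set H) ∧ CodimIn M X 1}

/-- The image `U(M)` of a subspace `M ⊆ X` under a linear isometry `U : X ≃ X'`,
viewed as a subspace of `H`. -/
def imL (X X' : Submodule ℂ H) (U : ↥X ≃ₗᵢ[ℂ] ↥X') (M : Submodule ℂ H) : Submodule ℂ H :=
  Submodule.map X'.subtype (Submodule.map U.toLinearEquiv.toLinearMap (M.comap X.subtype))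

/-- The image `U(M)` of a subspace `M ⊆ X` under a conjugate-linear isometry `U : X ≃ X'`,
viewed as a subspace of `H`. -/
def imC (X X' : Submodule ℂ H) (U : ↥X ≃ₗᵢ⋆[ℂ] ↥X') (M : Submodule ℂ H) : Submodule ℂ H :=
  Submodule.map X'.subtype (Submodule.map U.toLinearEquiv.toLinearMap (M.comap X.subtype))

/-- The Grassmannian `G_k(H)` of `k`-dimensional subspaces of `H`. -/
def Gk (k : ℕ) : Set (Submodule ℂ H) :=
  {X | FiniteDimensional ℂ X ∧ finrank ℂ X = k}

/-- The Grassmannian `G^k(H)` of closed subspaces of `H` of codimension `k`. -/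
def GCk (k : ℕ) : Set (Submodule ℂ H) :=
  {X | IsClosed (X : Set H) ∧ FiniteDimensional ℂ (H ⧸ X) ∧ finrank ℂ (H ⧸ X) = k}

/-!
Put `W = X ⊓ Y`. Compatibility means `X = W ⊕ (X ⊓ Yᗮ)` and `Y = W ⊕ (Y ⊓ Xᗮ)`, so there are
nonzero `a ∈ X ⊓ Yᗮ` and `b ∈ Y ⊓ Xᗮ`. Then `Z = W ⊕ ℂa ⊕ ℂb` works: `W ⊕ ℂa` is a hyperplane of
`X`, and enlarging a hyperplane of `X` by a line orthogonal to `X` gives a subspace ortho-adjacent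
to `X`; symmetrically for `Y`. Finally, passing to a subspace of finite codimension and back does
not affect membership in `Ginf`, so `Z ∈ Ginf`.
-/

section Orthogonal

variable {𝕜 E : Type*} [RCLike 𝕜] [NormedAddCommGroup E] [InnerProductSpace 𝕜 E]

theorem mem_invtSubmodule_starProjection_iff {K L : Submodule 𝕜 E} [L.HasOrthogonalProjection] :
    K ∈ Module.End.invtSubmodule (L.starProjection : E →ₗ[𝕜] E) ↔ K ⊓ L ⊔ K ⊓ Lᗮ = K := by
  refine ⟨fun hK ↦ le_antisymm (sup_le inf_le_left inf_le_left) fun x hx ↦ ?_, fun hK x hx ↦ ?_⟩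
  · have hLx : L.starProjection x ∈ K := hK hx
    exact mem_sup.2 ⟨L.starProjection x, ⟨hLx, L.starProjection_apply_mem x⟩,
      x - L.starProjection x, ⟨K.sub_mem hx hLx, sub_starProjection_mem_orthogonal x⟩,
      add_sub_cancel _ _⟩
  · obtain ⟨y, ⟨hyK, hyL⟩, z, ⟨-, hzL⟩, rfl⟩ := mem_sup.1 (hK.ge hx)
    have hproj : L.starProjection (y + z) = y :=
      eq_starProjection_of_mem_orthogonal' hyL hzL rfl
    rwa [mem_comap, ContinuousLinearMap.coe_coe, hproj]

theorem commute_starProjection_iff {K L : Submodule 𝕜 E} [K.HasOrthogonalProjection]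
    [L.HasOrthogonalProjection] :
    Commute K.starProjection L.starProjection ↔ K ⊓ L ⊔ K ⊓ Lᗮ = K := by
  rw [ContinuousLinearMap.IsIdempotentElem.commute_iff K.isIdempotentElem_starProjection,
    range_starProjection, ker_starProjection, ← mem_invtSubmodule_starProjection_iff]
  exact and_iff_left_of_imp
    L.starProjection_isSymmetric.orthogonalComplement_mem_invtSubmodule

/-- For `V ≤ X`, the quotient `X / V` is identified with the orthogonal complement of `V` in `X`. -/
noncomputable def quotientEquivOrthogonalInf {V X : Submodule 𝕜 E} [V.HasOrthogonalProjection]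
    (hVX : V ≤ X) : (X ⧸ V.comap X.subtype) ≃ₗ[𝕜] ↥(Vᗮ ⊓ X) :=
  (quotientEquivOfIsCompl _ _ (isCompl_comap_subtype_of_isCompl_of_le
      V.isCompl_orthogonal hVX)).trans <|
    (LinearEquiv.ofEq _ _ (by ext; simp)).trans (comapSubtypeEquivOfLe inf_le_right)

theorem orthogonal_inf_sup_eq_right {V F : Submodule 𝕜 E} (hF : F ≤ Vᗮ) :
    Vᗮ ⊓ (V ⊔ F) = F := by
  rw [sup_comm, inf_comm, sup_inf_assoc_of_le _ hF, inf_orthogonal_eq_bot, sup_bot_eq]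

theorem finiteDimensional_iff_of_finiteDimensional_orthogonal_inf {V X : Submodule 𝕜 E}
    [V.HasOrthogonalProjection] (hVX : V ≤ X) [FiniteDimensional 𝕜 ↥(Vᗮ ⊓ X)] :
    FiniteDimensional 𝕜 V ↔ FiniteDimensional 𝕜 X := by
  refine ⟨fun _ ↦ ?_, fun _ ↦ finiteDimensional_of_le hVX⟩
  rw [← sup_orthogonal_inf_of_hasOrthogonalProjection hVX]
  infer_instance

end Orthogonal

section Codimension

variable {E : Type*} [NormedAddCommGroup E] [InnerProductSpace ℂ E] {V X : Submodule ℂ E} {n : ℕ}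

theorem codimIn_iff_finrank_orthogonal_inf [V.HasOrthogonalProjection] :
    CodimIn V X n ↔
      V ≤ X ∧ FiniteDimensional ℂ ↥(Vᗮ ⊓ X) ∧ finrank ℂ ↥(Vᗮ ⊓ X) = n := by
  refine and_congr_right fun hVX ↦ ?_
  let e := quotientEquivOrthogonalInf hVX
  exact and_congr (Module.Finite.equiv_iff e) (by rw [e.finrank_eq])

theorem codimIn_self_sup_of_le_orthogonal [V.HasOrthogonalProjection] {F : Submodule ℂ E}
    [FiniteDimensional ℂ F] (hF : F ≤ Vᗮ) : CodimIn V (V ⊔ F) (finrank ℂ F) := by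
  rw [codimIn_iff_finrank_orthogonal_inf, orthogonal_inf_sup_eq_right hF]
  exact ⟨le_sup_left, inferInstance, rfl⟩

theorem CodimIn.sup_left_of_le_orthogonal [V.HasOrthogonalProjection] {F : Submodule ℂ E}
    [(V ⊔ F).HasOrthogonalProjection] (h : CodimIn V X (finrank ℂ F + n)) (hFX : F ≤ X)
    (hFV : F ≤ Vᗮ) : CodimIn (V ⊔ F) X n := by
  obtain ⟨hVX, _, hrank⟩ := codimIn_iff_finrank_orthogonal_inf.1 h
  have horth : (V ⊔ F)ᗮ ⊓ X = Fᗮ ⊓ (Vᗮ ⊓ X) := by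
    rw [← inf_orthogonal, inf_comm Vᗮ, inf_assoc]
  have hadd := finrank_add_inf_finrank_orthogonal (le_inf hFV hFX)
  rw [codimIn_iff_finrank_orthogonal_inf, horth]
  exact ⟨sup_le hVX hFX, finiteDimensional_of_le inf_le_right, by lia⟩

theorem CodimIn.not_le (h : CodimIn V X n) (hn : n ≠ 0) : ¬X ≤ V := by
  intro hXV
  apply hn
  rw [← h.2.2, comap_subtype_eq_top.2 hXV]
  exact finrank_zero_of_subsingleton

end Codimension

section Compatibility

variable {V X Y : Submodule ℂ H} {n : ℕ}

theorem projCLM_eq_starProjection [X.HasOrthogonalProjection] (hX : IsClosed (X : Set H)) :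
    projCLM X = X.starProjection :=
  dif_pos hX

theorem compatible_iff (hX : IsClosed (X : Set H)) (hY : IsClosed (Y : Set H)) :
    Compatible X Y ↔ X ⊓ Y ⊔ X ⊓ Yᗮ = X := by
  have := hX.completeSpace_coe
  have := hY.completeSpace_coe
  rw [Compatible, projCLM_eq_starProjection hX, projCLM_eq_starProjection hY,
    commute_starProjection_iff]

theorem Compatible.symm (h : Compatible X Y) : Compatible Y X :=
  Commute.symm h

theorem Compatible.exists_ne_zero_mem_inf_orthogonal (h : Compatible X Y)
    (hX : IsClosed (X : Set H)) (hY : IsClosed (Y : Set H)) (hXY : ¬X ≤ Y) :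
    ∃ a ∈ X ⊓ Yᗮ, a ≠ 0 := by
  refine exists_mem_ne_zero_of_ne_bot fun hbot ↦ hXY ?_
  have hdecomp := (compatible_iff hX hY).1 h
  rw [hbot, sup_bot_eq] at hdecomp
  exact inf_eq_left.1 hdecomp

theorem compatible_sup (hX : IsClosed (X : Set H)) {F : Submodule ℂ H}
    (hVF : IsClosed ((V ⊔ F : Submodule ℂ H) : Set H)) (hVX : V ≤ X) (hF : F ≤ Xᗮ) :
    Compatible (V ⊔ F) X :=
  (compatible_iff hVF hX).2 <| le_antisymm (sup_le inf_le_left inf_le_left) <|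
    sup_le_sup (le_inf le_sup_left hVX) (le_inf le_sup_right hF)

theorem CodimIn.orthoAdjacent_sup_span_singleton (h : CodimIn V X 1) (hV : IsClosed (V : Set H))
    (hX : IsClosed (X : Set H)) {b : H} (hbX : b ∈ Xᗮ) (hb : b ≠ 0) :
    OrthoAdjacent (V ⊔ span ℂ {b}) X := by
  have := hV.completeSpace_coe
  have hspan : span ℂ {b} ≤ Xᗮ := (span_singleton_le_iff_mem _ _).2 hbX
  have hinf : (V ⊔ span ℂ {b}) ⊓ X = V := by
    rw [sup_inf_assoc_of_le _ h.1, (X.orthogonal_disjoint.symm.mono_left hspan).eq_bot, sup_bot_eq]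
  have hcodim := codimIn_self_sup_of_le_orthogonal (hspan.trans (orthogonal_le h.1))
  rw [finrank_span_singleton hb] at hcodim
  exact ⟨⟨hinf.symm ▸ hcodim, hinf.symm ▸ h⟩,
    compatible_sup hX (isClosed_sup_finiteDimensional _ _ hV) h.1 hspan⟩

theorem CodimIn.mem_ginf_iff (h : CodimIn V X n) (hV : IsClosed (V : Set H))
    (hX : IsClosed (X : Set H)) : V ∈ Ginf ↔ X ∈ Ginf := by
  have := hV.completeSpace_coe
  have := hX.completeSpace_coe
  obtain ⟨hVX, _, -⟩ := codimIn_iff_finrank_orthogonal_inf.1 h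
  have : FiniteDimensional ℂ ↥(Xᗮᗮ ⊓ Vᗮ) := by
    rwa [orthogonal_orthogonal, inf_comm]
  have hdim := finiteDimensional_iff_of_finiteDimensional_orthogonal_inf hVX
  have hcodim := finiteDimensional_iff_of_finiteDimensional_orthogonal_inf (orthogonal_le hVX)
  exact and_congr (iff_of_true hV hX) (and_congr (not_congr hdim) (not_congr hcodim.symm))

theorem Adjacent.mem_ginf_iff (h : Adjacent X Y) (hX : IsClosed (X : Set H))
    (hY : IsClosed (Y : Set H)) : X ∈ Ginf ↔ Y ∈ Ginf :=
  (h.1.mem_ginf_iff (hX.inter hY) hX).symm.trans (h.2.mem_ginf_iff (hX.inter hY) hY)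

theorem CodimIn.orthoAdjacent_sup_span_sup_span (h : CodimIn V X 2) (hV : IsClosed (V : Set H))
    (hX : IsClosed (X : Set H)) {a b : H} (haX : a ∈ X) (haV : a ∈ Vᗮ) (ha : a ≠ 0)
    (hbX : b ∈ Xᗮ) (hb : b ≠ 0) : OrthoAdjacent (V ⊔ span ℂ {a} ⊔ span ℂ {b}) X := by
  have hVa := isClosed_sup_finiteDimensional V (span ℂ {a}) hV
  have := hV.completeSpace_coe
  have := hVa.completeSpace_coe
  have hhyperplane : CodimIn (V ⊔ span ℂ {a}) X 1 :=
    CodimIn.sup_left_of_le_orthogonal (by rwa [finrank_span_singleton ha])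
      ((span_singleton_le_iff_mem _ _).2 haX) ((span_singleton_le_iff_mem _ _).2 haV)
  exact hhyperplane.orthoAdjacent_sup_span_singleton hVa hX hbX hb

end Compatibility

theorem stmt2_general {X Y : Submodule ℂ H} (hX : IsClosed (X : Set H))
    (hY : IsClosed (Y : Set H)) (hcomp : Compatible X Y) (h2X : CodimIn (X ⊓ Y) X 2)
    (h2Y : CodimIn (X ⊓ Y) Y 2) :
    ∃ Z : Submodule ℂ H, IsClosed (Z : Set H) ∧ OrthoAdjacent Z X ∧ OrthoAdjacent Z Y := by
  have hXY : ¬X ≤ Y := fun hle ↦ h2X.not_le two_ne_zero (le_inf le_rfl hle)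
  have hYX : ¬Y ≤ X := fun hle ↦ h2Y.not_le two_ne_zero (le_inf hle le_rfl)
  obtain ⟨a, ⟨haX, haY⟩, ha⟩ := hcomp.exists_ne_zero_mem_inf_orthogonal hX hY hXY
  obtain ⟨b, ⟨hbY, hbX⟩, hb⟩ := hcomp.symm.exists_ne_zero_mem_inf_orthogonal hY hX hYX
  have hW : IsClosed ((X ⊓ Y : Submodule ℂ H) : Set H) := hX.inter hY
  refine ⟨X ⊓ Y ⊔ span ℂ {a} ⊔ span ℂ {b},
    isClosed_sup_finiteDimensional _ _ (isClosed_sup_finiteDimensional _ _ hW),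
    h2X.orthoAdjacent_sup_span_sup_span hW hX haX (orthogonal_le inf_le_right haY) ha hbX hb, ?_⟩
  rw [sup_right_comm]
  exact h2Y.orthoAdjacent_sup_span_sup_span hW hY hbY (orthogonal_le inf_le_left hbX) hb haY ha

/-- if `X, Y ∈ G_∞(H)` are compatible and `X ∩ Y` has codimension 2 in both,
then there is `Z ∈ G_∞(H)` ortho-adjacent to both `X` and `Y`. -/
theorem stmt2 (hH : ¬FiniteDimensional ℂ H) (X Y : Submodule ℂ H)
    (hX : X ∈ Ginf (H := H)) (hY : Y ∈ Ginf (H := H))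
    (hcomp : Compatible X Y)
    (h2X : CodimIn (X ⊓ Y) X 2) (h2Y : CodimIn (X ⊓ Y) Y 2) :
    ∃ Z ∈ Ginf (H := H), OrthoAdjacent Z X ∧ OrthoAdjacent Z Y := by
  obtain ⟨Z, hZ, hZX, hZY⟩ := stmt2_general hX.1 hY.1 hcomp h2X h2Y
  exact ⟨Z, (hZX.1.mem_ginf_iff hZ hX.1).2 hX, hZX, hZY⟩
end

section
/- Let X, Y ∈ G_∞(H) be subspaces such that X ∩ Y has codimension 2 in both X and Y. If there exist Z, Z' ∈ G_∞(H) which are ortho-adjacent to each other and such that each of Z, Z' is ortho-adjacent to both X and Y, then X and Y are compatible. -/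
open Module Submodule Classical

variable {H : Type*} [NormedAddCommGroup H] [InnerProductSpace ℂ H] [CompleteSpace H]

/-!
In the lattice of subspaces "hyperplane" means "covered by", and modularity alone fixes the
relative position of the four subspaces: `X ∩ Y` is a hyperplane in each of `Z ∩ X`, `Z' ∩ X`,
`Z ∩ Y`, `Z' ∩ Y`, and at least one of `Z ∩ X`, `Z ∩ Y` lies in `Z'`. Say `Z ∩ X ⊆ Z'`. Then
`Z ∩ X = Z' ∩ X =: A`, while `Z ∩ Y ∩ Z' ⊆ X` and `Y = (Z ∩ Y) + (Z' ∩ Y)`. The projections `P_X`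
and `P_Y` leave `Z` and `Z'` invariant, so `P_X` maps `Y` into `A` and `P_Y` maps `A` into
`Z ∩ Y ∩ Z' ⊆ X`. Hence `P_X` maps `Y` into itself, which means that `P_X` and `P_Y` commute.
-/

section Lattice

variable {α : Type*} [Lattice α] {x y z z' : α}

theorem inf_sup_inf_eq_of_covBy (hzy : z ⊓ y ⋖ z) (hzx : ¬z ⊓ x ≤ y) : z ⊓ x ⊔ z ⊓ y = z :=
  (hzy.eq_or_eq le_sup_right (sup_le inf_le_left inf_le_left)).resolve_left fun h =>
    hzx ((le_sup_left.trans h.le).trans inf_le_right)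

theorem inf_eq_of_covBy_of_not_le (hxy : x ⋖ y) (hxz : x ≤ z) (hyz : ¬y ≤ z) : y ⊓ z = x :=
  (hxy.eq_or_eq (le_inf hxy.le hxz) inf_le_left).resolve_right fun h => hyz (inf_eq_left.1 h)

theorem not_inf_le_of_not_inf_wcovBy (hzx : z ⊓ x ⋖ x) (hxy : ¬x ⊓ y ⩿ x) : ¬z ⊓ x ≤ y :=
  fun hle => hxy (hzx.wcovBy.of_le_of_le (le_inf inf_le_right hle) inf_le_left)

theorem inf_inf_covBy_of_covBy [IsLowerModularLattice α] (hzy : z ⊓ y ⋖ z) (hzx : ¬z ⊓ x ≤ y) :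
    z ⊓ x ⊓ y ⋖ z ⊓ x := by
  have hcov : z ⊓ x ⊓ (z ⊓ y) ⋖ z ⊓ x :=
    inf_covBy_of_covBy_sup_right (by rwa [inf_sup_inf_eq_of_covBy hzy hzx])
  rwa [inf_inf_inf_comm, inf_idem, ← inf_assoc] at hcov

variable [IsModularLattice α]

theorem inf_le_of_not_inf_wcovBy (hzx : z ⊓ x ⋖ x) (hzy : z ⊓ y ⋖ z) (hxy : ¬x ⊓ y ⩿ x) :
    x ⊓ y ≤ z := by
  by_contra hz
  have hsup : x ⊓ y ⊔ x ⊓ z = x := inf_sup_inf_eq_of_covBy (by rwa [inf_comm x z]) hz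
  have hcov := inf_inf_covBy_of_covBy hzy (not_inf_le_of_not_inf_wcovBy hzx hxy)
  have hinf : x ⊓ y ⊓ (x ⊓ z) = z ⊓ x ⊓ y := by
    rw [← inf_inf_distrib_left, inf_comm y, inf_left_comm, inf_assoc]
  have hcov_sup : x ⊓ y ⋖ x ⊓ y ⊔ x ⊓ z :=
    covBy_sup_of_inf_covBy_right (by rwa [hinf, inf_comm x z])
  exact hxy (hsup ▸ hcov_sup).wcovBy

theorem inf_covBy_inf_of_not_inf_wcovBy (hzx : z ⊓ x ⋖ x) (hzy : z ⊓ y ⋖ z)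
    (hxy : ¬x ⊓ y ⩿ x) : x ⊓ y ⋖ z ⊓ x := by
  have hcov := inf_inf_covBy_of_covBy hzy (not_inf_le_of_not_inf_wcovBy hzx hxy)
  rwa [inf_assoc, inf_eq_right.2 (inf_le_of_not_inf_wcovBy hzx hzy hxy)] at hcov

theorem inf_le_or_inf_le_of_covBy (hzz' : z ⊓ z' ⋖ z) (hz' : z' ⊓ x ⊔ z' ⊓ y = z')
    (hxy : x ⊓ y ≤ z') : z ⊓ x ≤ z' ∨ z ⊓ y ≤ z' := by
  refine or_iff_not_imp_left.2 fun hzx => ?_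
  have hz : z ≤ z' ⊓ y ⊔ x :=
    calc z = z ⊓ x ⊔ z ⊓ z' := (inf_sup_inf_eq_of_covBy hzz' hzx).symm
      _ ≤ x ⊔ z' := sup_le_sup inf_le_right inf_le_right
      _ = x ⊔ (z' ⊓ x ⊔ z' ⊓ y) := by rw [hz']
      _ = z' ⊓ y ⊔ x := by rw [← sup_assoc, sup_eq_left.2 (inf_le_right : z' ⊓ x ≤ x), sup_comm]
  calc z ⊓ y ≤ (z' ⊓ y ⊔ x) ⊓ y := inf_le_inf_right y hz
    _ = z' ⊓ y ⊔ x ⊓ y := sup_inf_assoc_of_le x inf_le_right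
    _ ≤ z' := sup_le inf_le_left hxy

end Lattice

section OrthogonalProjection

variable {𝕜 E : Type*} [RCLike 𝕜] [NormedAddCommGroup E] [InnerProductSpace 𝕜 E]
  {U V W W' : Submodule 𝕜 E} [U.HasOrthogonalProjection] [V.HasOrthogonalProjection]

theorem commute_starProjection_iff_forall_mem :
    Commute U.starProjection V.starProjection ↔ ∀ v ∈ V, U.starProjection v ∈ V := by
  rw [Commute.symm_iff, ContinuousLinearMap.IsIdempotentElem.commute_iff
    V.isIdempotentElem_starProjection, range_starProjection, ker_starProjection]
  exact ⟨fun h => h.1, fun h =>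
    ⟨h, U.starProjection_isSymmetric.orthogonalComplement_mem_invtSubmodule h⟩⟩

theorem starProjection_mem_of_starProjection_starProjection_mem {v : E} (hv : v ∈ V)
    (hU : V.starProjection (U.starProjection v) ∈ U) : U.starProjection v ∈ V := by
  set d := U.starProjection v - V.starProjection (U.starProjection v) with hd
  have hdV : d ∈ Vᗮ := V.sub_starProjection_mem_orthogonal _
  have hdU : d ∈ U := U.sub_mem (U.starProjection_apply_mem v) hU
  have hdd : inner 𝕜 d d = 0 :=
    calc inner 𝕜 d d
        = inner 𝕜 d (U.starProjection v) := by
          rw [hd, inner_sub_right, ← hd,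
            inner_left_of_mem_orthogonal (V.starProjection_apply_mem _) hdV, sub_zero]
      _ = inner 𝕜 d v := by
          rw [← inner_starProjection_left_eq_right, starProjection_eq_self_iff.2 hdU]
      _ = 0 := inner_left_of_mem_orthogonal hv hdV
  have hfix := sub_eq_zero.1 (inner_self_eq_zero.1 hdd)
  exact starProjection_eq_self_iff.1 hfix.symm

variable [W.HasOrthogonalProjection] [W'.HasOrthogonalProjection]

theorem commute_starProjection_of_inf_eq_inf
    (hWU : Commute W.starProjection U.starProjection)
    (hWV : Commute W.starProjection V.starProjection)
    (hW'U : Commute W'.starProjection U.starProjection)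
    (hW'V : Commute W'.starProjection V.starProjection)
    (hU : W ⊓ U = W' ⊓ U) (hle : W ⊓ V ⊓ W' ≤ U) (hV : W ⊓ V ⊔ W' ⊓ V = V) :
    Commute U.starProjection V.starProjection := by
  have mem_of_mem_inf {v : E} (hv : v ∈ V) (hUv : U.starProjection v ∈ W ⊓ U) :
      U.starProjection v ∈ V := by
    refine starProjection_mem_of_starProjection_starProjection_mem hv (hle ⟨⟨?_, ?_⟩, ?_⟩)
    · exact commute_starProjection_iff_forall_mem.1 hWV.symm _ hUv.1
    · exact V.starProjection_apply_mem _
    · exact commute_starProjection_iff_forall_mem.1 hW'V.symm _ (hU ▸ hUv).1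
  refine commute_starProjection_iff_forall_mem.2 fun v hv => ?_
  obtain ⟨w, hw, w', hw', rfl⟩ := mem_sup.1 (hV ▸ hv)
  rw [map_add]
  refine V.add_mem (mem_of_mem_inf hw.2 ⟨?_, ?_⟩) (mem_of_mem_inf hw'.2 (hU ▸ ⟨?_, ?_⟩))
  · exact commute_starProjection_iff_forall_mem.1 hWU.symm w hw.1
  · exact U.starProjection_apply_mem w
  · exact commute_starProjection_iff_forall_mem.1 hW'U.symm w' hw'.1
  · exact U.starProjection_apply_mem w'

theorem commute_starProjection_of_covBy_of_inf_le
    (hWU : Commute W.starProjection U.starProjection)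
    (hWV : Commute W.starProjection V.starProjection)
    (hW'U : Commute W'.starProjection U.starProjection)
    (hW'V : Commute W'.starProjection V.starProjection)
    (hcovU : U ⊓ V ⋖ W ⊓ U) (hcovU' : U ⊓ V ⋖ W' ⊓ U) (hcovV : U ⊓ V ⋖ W ⊓ V)
    (hV : W' ⊓ V ⋖ V) (hW : W ⊓ U ⊔ W ⊓ V = W) (hWW' : ¬W ≤ W') (hle : W ⊓ U ≤ W') :
    Commute U.starProjection V.starProjection := by
  have hnle : ¬W ⊓ V ≤ W' := fun h => hWW' (hW.ge.trans (sup_le hle h))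
  have hinf : W ⊓ U = W' ⊓ U :=
    (hcovU'.eq_or_eq hcovU.le (le_inf hle inf_le_right)).resolve_left hcovU.ne'
  refine commute_starProjection_of_inf_eq_inf hWU hWV hW'U hW'V hinf ?_ ?_
  · rw [inf_eq_of_covBy_of_not_le hcovV (hcovU'.le.trans inf_le_left) hnle]
    exact inf_le_left
  · rw [inf_comm] at hV hnle
    rw [inf_comm W, inf_comm W', inf_sup_inf_eq_of_covBy hV hnle]

end OrthogonalProjection

section Codimension

variable {E : Type*} [NormedAddCommGroup E] [InnerProductSpace ℂ E] {K L : Submodule ℂ E}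

theorem codimIn_one_iff_covBy : CodimIn K L 1 ↔ K ⋖ L := by
  constructor
  · rintro ⟨hle, -, hrank⟩
    exact (covBy_iff_quot_is_simple hle).2 (isSimpleModule_iff_finrank_eq_one.2 hrank)
  · intro hcov
    have hrank := isSimpleModule_iff_finrank_eq_one.1 ((covBy_iff_quot_is_simple hcov.le).1 hcov)
    exact ⟨hcov.le, FiniteDimensional.of_finrank_eq_succ hrank, hrank⟩

theorem CodimIn.le_one_of_wcovBy {n : ℕ} (h : CodimIn K L n) (hKL : K ⩿ L) : n ≤ 1 := by
  rw [← h.2.2]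
  obtain hcov | rfl := hKL.covBy_or_eq
  · exact (codimIn_one_iff_covBy.2 hcov).2.2.le
  · have : Subsingleton (K ⧸ K.comap K.subtype) := by
      rw [Submodule.Quotient.subsingleton_iff, comap_subtype_self]
    exact finrank_zero_of_subsingleton.le.trans zero_le_one

theorem adjacent_iff_covBy : Adjacent K L ↔ K ⊓ L ⋖ K ∧ K ⊓ L ⋖ L :=
  and_congr codimIn_one_iff_covBy codimIn_one_iff_covBy

end Codimension

theorem projCLM_eq_starProjection_s4 (K : Submodule ℂ H) [CompleteSpace K] :
    projCLM K = K.starProjection :=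
  dif_pos (completeSpace_coe_iff_isComplete.1 ‹_›).isClosed

theorem compatible_iff_commute_starProjection {K L : Submodule ℂ H} [CompleteSpace K]
    [CompleteSpace L] : Compatible K L ↔ Commute K.starProjection L.starProjection := by
  rw [Compatible, projCLM_eq_starProjection_s4, projCLM_eq_starProjection_s4]

theorem stmt4_general {X Y Z Z' : Submodule ℂ H} (hX : IsClosed (X : Set H))
    (hY : IsClosed (Y : Set H)) (hZ : IsClosed (Z : Set H)) (hZ' : IsClosed (Z' : Set H))
    (h2X : CodimIn (X ⊓ Y) X 2) (h2Y : CodimIn (X ⊓ Y) Y 2) (hZZ' : Adjacent Z Z')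
    (hZX : OrthoAdjacent Z X) (hZY : OrthoAdjacent Z Y)
    (hZ'X : OrthoAdjacent Z' X) (hZ'Y : OrthoAdjacent Z' Y) : Compatible X Y := by
  have := hX.completeSpace_coe
  have := hY.completeSpace_coe
  have := hZ.completeSpace_coe
  have := hZ'.completeSpace_coe
  simp only [OrthoAdjacent, adjacent_iff_covBy, compatible_iff_commute_starProjection]
    at hZZ' hZX hZY hZ'X hZ'Y ⊢
  obtain ⟨⟨hZX_Z, hZX_X⟩, cZX⟩ := hZX
  obtain ⟨⟨hZY_Z, hZY_Y⟩, cZY⟩ := hZY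
  obtain ⟨⟨hZ'X_Z', hZ'X_X⟩, cZ'X⟩ := hZ'X
  obtain ⟨⟨hZ'Y_Z', hZ'Y_Y⟩, cZ'Y⟩ := hZ'Y
  have hnX : ¬X ⊓ Y ⩿ X := fun h => absurd (h2X.le_one_of_wcovBy h) (by decide)
  have hnY : ¬Y ⊓ X ⩿ Y := fun h => absurd (h2Y.le_one_of_wcovBy (inf_comm X Y ▸ h)) (by decide)
  have hcovX := inf_covBy_inf_of_not_inf_wcovBy hZX_X hZY_Z hnX
  have hcovX' := inf_covBy_inf_of_not_inf_wcovBy hZ'X_X hZ'Y_Z' hnX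
  have hcovY := inf_covBy_inf_of_not_inf_wcovBy hZY_Y hZX_Z hnY
  have hcovY' := inf_covBy_inf_of_not_inf_wcovBy hZ'Y_Y hZ'X_Z' hnY
  have hsup := inf_sup_inf_eq_of_covBy hZY_Z (not_inf_le_of_not_inf_wcovBy hZX_X hnX)
  have hsup' := inf_sup_inf_eq_of_covBy hZ'Y_Z' (not_inf_le_of_not_inf_wcovBy hZ'X_X hnX)
  have hnle : ¬Z ≤ Z' := fun h => hZZ'.1.ne (inf_eq_left.2 h)
  rcases inf_le_or_inf_le_of_covBy hZZ'.1 hsup' (hcovX'.le.trans inf_le_left) with hle | hle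
  · exact commute_starProjection_of_covBy_of_inf_le cZX cZY cZ'X cZ'Y hcovX hcovX'
      (inf_comm X Y ▸ hcovY) hZ'Y_Y hsup hnle hle
  · exact (commute_starProjection_of_covBy_of_inf_le cZY cZX cZ'Y cZ'X hcovY hcovY'
      (inf_comm X Y ▸ hcovX) hZ'X_X (by rwa [sup_comm]) hnle hle).symm

/-- if `X ∩ Y` has codimension 2 in both `X, Y ∈ G_∞(H)` and there exist
ortho-adjacent `Z, Z' ∈ G_∞(H)` each ortho-adjacent to both `X` and `Y`, then `X` and `Y`
are compatible. -/
theorem stmt4 (hH : ¬FiniteDimensional ℂ H) (X Y : Submodule ℂ H)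
    (hX : X ∈ Ginf (H := H)) (hY : Y ∈ Ginf (H := H))
    (h2X : CodimIn (X ⊓ Y) X 2) (h2Y : CodimIn (X ⊓ Y) Y 2)
    (hex : ∃ Z ∈ Ginf (H := H), ∃ Z' ∈ Ginf (H := H), OrthoAdjacent Z Z' ∧
      OrthoAdjacent Z X ∧ OrthoAdjacent Z Y ∧ OrthoAdjacent Z' X ∧ OrthoAdjacent Z' Y) :
    Compatible X Y := by
  obtain ⟨Z, hZ, Z', hZ', hZZ', hZX, hZY, hZ'X, hZ'Y⟩ := hex
  exact stmt4_general hX.1 hY.1 hZ.1 hZ'.1 h2X h2Y hZZ'.1 hZX hZY hZ'X hZ'Y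
end
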